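/- (Theorem 5, part 3) Let y* ∈ Ω solve the variational inequality ⟨g(y*), y − y*⟩ ≤ 0 for all y ∈ Ω. Suppose there exists δ > 0 with ⟨g(y) − g(y*), y − y*⟩ ≤ −δ‖y − y*‖² for all y ∈ Ω, and g is L-Lipschitz on Ω: ‖g(y₁) − g(y₂)‖ ≤ L‖y₁ − y₂‖ for all y₁, y₂ ∈ Ω. Assume κ = δ/L satisfies 0 ≤ κ ≤ 0.5, and take t = (2L)⁻¹. Then the extra pseudo-gradient iterates ŷ_s = P_Ω(y_s + t·g(y_s)), y_{s+1} = P_Ω(y_s + t·g(ŷ_s)) satisfy ‖y_{s+1} − y*‖ ≤ √(1 − 0.5κ)·‖y_s − y*‖ for every s ≥ 0. -/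

import Mathlib

open Matrix Filter
open scoped BigOperators

noncomputable section

/-- Vectors in ℝ^k. -/
abbrev Vec (k : ℕ) := Fin k → ℝ

/-- Standard Euclidean inner product on ℝ^k. -/
def ip {k : ℕ} (u v : Vec k) : ℝ := ∑ i, u i * v i

/-- Standard Euclidean norm on ℝ^k. -/
def nrm {k : ℕ} (u : Vec k) : ℝ := Real.sqrt (ip u u)

/-- The space ℝⁿ × ℝⁿ × ℝᵐ of triples y = (x, λ, v). -/
abbrev Triple (n m : ℕ) := Vec n × Vec n × Vec m

/-- Euclidean inner product on the triple space. -/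
def ipT {n m : ℕ} (y z : Triple n m) : ℝ :=
  ip y.1 z.1 + ip y.2.1 z.2.1 + ip y.2.2 z.2.2

/-- Euclidean norm on the triple space. -/
def nrmT {n m : ℕ} (y : Triple n m) : ℝ := Real.sqrt (ipT y y)

/-- Ω = ℝ₊ⁿ × ℝ₊ⁿ × ℝ₊ᵐ. -/
def Om (n m : ℕ) : Set (Triple n m) :=
  {y | (∀ j, 0 ≤ y.1 j) ∧ (∀ j, 0 ≤ y.2.1 j) ∧ (∀ i, 0 ≤ y.2.2 i)}

/-- The operator g(x, λ, v) = ((I − A)ᵀλ − p(x) − Bᵀv, c(λ) − (I − A)x, Bx − r(v)). -/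
def gOp {n m : ℕ} (A : Matrix (Fin n) (Fin n) ℝ) (B : Matrix (Fin m) (Fin n) ℝ)
    (p c : Vec n → Vec n) (r : Vec m → Vec m) (y : Triple n m) : Triple n m :=
  ((1 - A)ᵀ *ᵥ y.2.1 - p y.1 - Bᵀ *ᵥ y.2.2,
   c y.2.1 - (1 - A) *ᵥ y.1,
   B *ᵥ y.1 - r y.2.2)

/-- P_Ω : componentwise positive part (Euclidean projection onto Ω). -/
def projOm {n m : ℕ} (y : Triple n m) : Triple n m :=
  (fun j => max (y.1 j) 0, fun j => max (y.2.1 j) 0, fun i => max (y.2.2 i) 0)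

theorem ip_comm' {k : ℕ} (u v : Vec k) : ip u v = ip v u := by
  simp [ip, mul_comm]
theorem ip_sub' {k : ℕ} (u v w : Vec k) : ip (u - v) w = ip u w - ip v w := by
  simp [ip, sub_mul, Finset.sum_sub_distrib]
theorem ip_add' {k : ℕ} (u v w : Vec k) : ip (u + v) w = ip u w + ip v w := by
  simp [ip, add_mul, Finset.sum_add_distrib]
theorem ip_smul' {k : ℕ} (a : ℝ) (u w : Vec k) : ip (a • u) w = a * ip u w := by
  simp [ip, Finset.mul_sum, mul_assoc]
theorem ip_nonneg' {k : ℕ} (u : Vec k) : 0 ≤ ip u u :=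
  Finset.sum_nonneg fun i _ => mul_self_nonneg _
theorem ipT_comm' {n m : ℕ} (u v : Triple n m) : ipT u v = ipT v u := by
  simp only [ipT, ip_comm' u.1, ip_comm' u.2.1, ip_comm' u.2.2]
theorem ipT_sub' {n m : ℕ} (u v w : Triple n m) : ipT (u - v) w = ipT u w - ipT v w := by
  simp only [ipT, Prod.fst_sub, Prod.snd_sub, ip_sub']; ring
theorem ipT_add' {n m : ℕ} (u v w : Triple n m) : ipT (u + v) w = ipT u w + ipT v w := by
  simp only [ipT, Prod.fst_add, Prod.snd_add, ip_add']; ring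
theorem ipT_smul' {n m : ℕ} (a : ℝ) (u w : Triple n m) : ipT (a • u) w = a * ipT u w := by
  simp only [ipT, Prod.smul_fst, Prod.smul_snd, ip_smul']; ring
theorem ipT_sub_r {n m : ℕ} (u v w : Triple n m) : ipT w (u - v) = ipT w u - ipT w v := by
  rw [ipT_comm', ipT_sub', ipT_comm' u, ipT_comm' v]
theorem ipT_smul_r {n m : ℕ} (a : ℝ) (u w : Triple n m) : ipT w (a • u) = a * ipT w u := by
  rw [ipT_comm', ipT_smul', ipT_comm' u]
theorem ipT_nonneg' {n m : ℕ} (u : Triple n m) : 0 ≤ ipT u u :=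
  add_nonneg (add_nonneg (ip_nonneg' _) (ip_nonneg' _)) (ip_nonneg' _)
theorem nrmT_sq' {n m : ℕ} (u : Triple n m) : nrmT u ^ 2 = ipT u u :=
  Real.sq_sqrt (ipT_nonneg' u)
theorem projOm_mem' {n m : ℕ} (u : Triple n m) : projOm u ∈ Om n m :=
  ⟨fun _ => le_max_right _ _, fun _ => le_max_right _ _, fun _ => le_max_right _ _⟩
theorem proj_ip' {k : ℕ} (u w : Vec k) (hw : ∀ j, 0 ≤ w j) :
    ip (u - fun j => max (u j) 0) (w - fun j => max (u j) 0) ≤ 0 := by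
  refine Finset.sum_nonpos fun j _ => ?_
  simp only [Pi.sub_apply]
  rcases le_total (u j) 0 with h | h
  · rw [max_eq_right h]; nlinarith [hw j]
  · rw [max_eq_left h]; simp
theorem proj_ipT' {n m : ℕ} (u w : Triple n m) (hw : w ∈ Om n m) :
    ipT (u - projOm u) (w - projOm u) ≤ 0 :=
  add_nonpos (add_nonpos (proj_ip' _ _ hw.1) (proj_ip' _ _ hw.2.1)) (proj_ip' _ _ hw.2.2)

/-- Theorem 5, part 3: under strong monotonicity at y* and Lipschitz
continuity of g on Ω, if κ = δ/L ∈ [0, 0.5] and t = (2L)⁻¹, then the extra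
pseudo-gradient iterates satisfy ‖y_{s+1} − y*‖ ≤ √(1 − 0.5κ)·‖y_s − y*‖. -/
theorem stmt19 {n m : ℕ} (hn : 0 < n) (hm : 0 < m)
    (A : Matrix (Fin n) (Fin n) ℝ) (B : Matrix (Fin m) (Fin n) ℝ)
    (p c : Vec n → Vec n) (r : Vec m → Vec m)
    (ys : Triple n m) (hys : ys ∈ Om n m)
    (hVI : ∀ y ∈ Om n m, ipT (gOp A B p c r ys) (y - ys) ≤ 0)
    (δ L : ℝ) (hδ : 0 < δ) (hL : 0 < L)
    (hmono : ∀ y ∈ Om n m,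
      ipT (gOp A B p c r y - gOp A B p c r ys) (y - ys) ≤ -δ * nrmT (y - ys) ^ 2)
    (hlip : ∀ y₁ ∈ Om n m, ∀ y₂ ∈ Om n m,
      nrmT (gOp A B p c r y₁ - gOp A B p c r y₂) ≤ L * nrmT (y₁ - y₂))
    (hκ0 : 0 ≤ δ / L) (hκ1 : δ / L ≤ 0.5)
    (y yh : ℕ → Triple n m) (hy0 : y 0 ∈ Om n m)
    (hyh : ∀ s : ℕ, yh s = projOm (y s + (2 * L)⁻¹ • gOp A B p c r (y s)))
    (hiter : ∀ s : ℕ, y (s + 1) = projOm (y s + (2 * L)⁻¹ • gOp A B p c r (yh s))) :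
    ∀ s : ℕ, nrmT (y (s + 1) - ys) ≤
      Real.sqrt (1 - 0.5 * (δ / L)) * nrmT (y s - ys) := by
  intro s
  have hmem : y s ∈ Om n m := by
    cases s with
    | zero => exact hy0
    | succ k => rw [hiter]; exact projOm_mem' _
  have hhm : yh s ∈ Om n m := by rw [hyh]; exact projOm_mem' _
  have hzm : y (s + 1) ∈ Om n m := by rw [hiter]; exact projOm_mem' _
  have P1 := proj_ipT' (y s + (2 * L)⁻¹ • gOp A B p c r (yh s)) ys hys
  rw [← hiter s] at P1
  have P2 := proj_ipT' (y s + (2 * L)⁻¹ • gOp A B p c r (y s)) _ hzm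
  rw [← hyh s] at P2
  have M := hmono _ hhm
  have V := hVI _ hhm
  have Lp := hlip _ hhm _ hmem
  have Lp2 : (nrmT (gOp A B p c r (yh s) - gOp A B p c r (y s))) ^ 2
      ≤ (L * nrmT (yh s - y s)) ^ 2 := pow_le_pow_left₀ (Real.sqrt_nonneg _) Lp 2
  rw [mul_pow, nrmT_sq', nrmT_sq'] at Lp2
  rw [nrmT_sq'] at M
  generalize y (s + 1) = z at *
  generalize yh s = h at *
  generalize y s = x at *
  generalize gOp A B p c r h = Gh at *
  generalize gOp A B p c r x = Gx at *
  generalize gOp A B p c r ys = Gu at *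
  obtain ⟨t, ht⟩ : ∃ t, t = (2 * L)⁻¹ := ⟨_, rfl⟩
  obtain ⟨κ, hκ⟩ : ∃ κ, κ = δ / L := ⟨_, rfl⟩
  rw [← ht] at P1 P2
  rw [← hκ] at hκ0 hκ1 ⊢
  have htL : t * L = 1 / 2 := by rw [ht]; field_simp
  have htδ : 2 * t * δ = κ := by rw [ht, hκ]; field_simp
  have ht0 : 0 < t := by rw [ht]; positivity
  norm_num at hκ1
  have Q := ipT_nonneg' ((z - h) - t • (Gh - Gx))
  -- Lipschitz, scaled
  have E1 : t ^ 2 * ipT (Gh - Gx) (Gh - Gx) ≤ 1 / 4 * ipT (h - x) (h - x) := by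
    have := mul_le_mul_of_nonneg_left Lp2 (sq_nonneg t)
    have e : t ^ 2 * (L ^ 2 * ipT (h - x) (h - x)) = (t * L) ^ 2 * ipT (h - x) (h - x) := by ring
    rw [e, htL] at this
    linarith
  have E2 : 2 * t * ipT Gh (h - ys) ≤ -κ * ipT (h - ys) (h - ys) := by
    have h1 : ipT Gh (h - ys) ≤ -δ * ipT (h - ys) (h - ys) := by
      rw [ipT_sub'] at M; linarith
    have := mul_le_mul_of_nonneg_left h1 (by positivity : 0 ≤ 2 * t)
    rw [← htδ]; linarith
  have E3 : κ * ipT (x - ys) (x - ys) ≤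
      2 * κ * ipT (h - x) (h - x) + 2 * κ * ipT (h - ys) (h - ys) := by
    have h1 := ipT_nonneg' ((h - x) + (h - ys))
    have h2 : ipT ((h - x) + (h - ys)) ((h - x) + (h - ys)) + ipT (x - ys) (x - ys)
        = 2 * ipT (h - x) (h - x) + 2 * ipT (h - ys) (h - ys) := by
      simp only [ipT_add', ipT_sub', ipT_sub_r, ipT_comm' _ (h - x + (h - ys))]
      simp only [ipT_comm' x h, ipT_comm' ys h, ipT_comm' ys x]
      ring
    have := mul_le_mul_of_nonneg_left (by linarith : ipT (x - ys) (x - ys) ≤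
      2 * ipT (h - x) (h - x) + 2 * ipT (h - ys) (h - ys)) hκ0
    linarith
  have E4 : κ * ipT (h - x) (h - x) ≤ 3 / 4 * ipT (h - x) (h - x) :=
    mul_le_mul_of_nonneg_right (by linarith) (ipT_nonneg' _)
  have main : ipT (z - ys) (z - ys) ≤ (1 - 0.5 * κ) * ipT (x - ys) (x - ys) := by
    have F : ipT (z - ys) (z - ys) ≤ ipT (x - ys) (x - ys) - 3 / 4 * ipT (h - x) (h - x)
        - κ * ipT (h - ys) (h - ys) := by
      clear E3 E4 M V Lp2
      have E2' : 2 * t * ipT Gh (h - ys) + κ * ipT (h - ys) (h - ys) ≤ 0 := by linarith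
      generalize κ * ipT (h - ys) (h - ys) = K at *
      simp only [ipT_add', ipT_sub', ipT_sub_r, ipT_smul', ipT_smul_r] at P1 P2 Q E1 E2' ⊢
      simp only [ipT_comm' x h, ipT_comm' ys h, ipT_comm' ys x, ipT_comm' z h, ipT_comm' z x,
        ipT_comm' z ys, ipT_comm' z Gh, ipT_comm' z Gx, ipT_comm' h Gh, ipT_comm' h Gx,
        ipT_comm' Gx Gh] at P1 P2 Q E1 E2' ⊢
      linarith
    norm_num
    linarith
  calc nrmT (z - ys) ≤ Real.sqrt ((1 - 0.5 * κ) * ipT (x - ys) (x - ys)) := Real.sqrt_le_sqrt main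
    _ = _ := by
      rw [Real.sqrt_mul (by norm_num; linarith)]; rfl
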